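/- Let S be a nonempty finite set, let d : S → ℝ with d_s ≠ 0 for all s ∈ S, and for each s ∈ S let P_s be a 2^n × 2^n complex matrix that is a Kronecker product of n matrices each belonging to {I₂, X, Z}. Let σ be a density matrix of size 2^n × 2^n, let H = Σ_{s∈S} d_s·P_s, let D = Σ_{s∈S} |d_s|, and let a ∈ ℝ. If Re Tr(H σ) ≤ a, then Σ_{s∈S} (|d_s|/D) · (1 − sign(d_s)·Re Tr(P_s σ))/2 ≥ 1/2 − a/(2D). (In a yes-instance of the 2-local XZ Hamiltonian problem, the per-round probability that the honest prover's measurement outcome equals −sign(d_s) is at least 1/2 − a/(2·Σ_s|d_s|).) -/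

import Mathlib

open Matrix BigOperators
open scoped ComplexOrder

noncomputable def pauliX : Matrix (Fin 2) (Fin 2) ℂ := !![0, 1; 1, 0]
noncomputable def pauliZ : Matrix (Fin 2) (Fin 2) ℂ := !![1, 0; 0, -1]

/-- The Kronecker product of a family of `n` 2×2 matrices, as a `2^n × 2^n` matrix
whose rows and columns are indexed by bit strings of length `n`. -/
noncomputable def kronPowFam {n : ℕ} (M : Fin n → Matrix (Fin 2) (Fin 2) ℂ) :
    Matrix (Fin n → Fin 2) (Fin n → Fin 2) ℂ :=
  Matrix.of fun x y => ∏ i, M i (x i) (y i)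

/-!
Since `|t| * sign t = t`, weighting the term `s` by `|d s| / D` turns the probability
`(1 - sign (d s) * Re Tr (P s σ)) / 2` of the outcome `-sign (d s)` into an affine function of the
energy contribution `d s * Re Tr (P s σ)`. The total is therefore exactly
`1 / 2 - Re Tr (H σ) / (2 * D)`, so an upper bound on the energy bounds it from below.
-/

theorem abs_mul_real_sign (t : ℝ) : |t| * Real.sign t = t := by
  rcases lt_trichotomy t 0 with ht | rfl | ht
  · rw [abs_of_neg ht, Real.sign_of_neg ht, mul_neg_one, neg_neg]
  · rw [Real.sign_zero, mul_zero]
  · rw [abs_of_pos ht, Real.sign_of_pos ht, mul_one]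

theorem abs_div_mul_one_sub_sign_mul_div_two (t x D : ℝ) :
    |t| / D * ((1 - Real.sign t * x) / 2) = (|t| - t * x) / (2 * D) :=
  calc |t| / D * ((1 - Real.sign t * x) / 2)
      = (|t| - |t| * Real.sign t * x) / (2 * D) := by ring
    _ = (|t| - t * x) / (2 * D) := by rw [abs_mul_real_sign]

theorem sum_abs_div_mul_one_sub_sign_mul_div_two {ι : Type*} (s : Finset ι) (d x : ι → ℝ)
    {D : ℝ} (hD : D = ∑ i ∈ s, |d i|) (hD₀ : D ≠ 0) :
    ∑ i ∈ s, |d i| / D * ((1 - Real.sign (d i) * x i) / 2)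
      = 1 / 2 - (∑ i ∈ s, d i * x i) / (2 * D) :=
  calc ∑ i ∈ s, |d i| / D * ((1 - Real.sign (d i) * x i) / 2)
      = (D - ∑ i ∈ s, d i * x i) / (2 * D) := by
        simp only [abs_div_mul_one_sub_sign_mul_div_two, ← Finset.sum_div,
          Finset.sum_sub_distrib, ← hD]
    _ = 1 / 2 - (∑ i ∈ s, d i * x i) / (2 * D) := by field_simp

theorem re_trace_sum_ofReal_smul_mul {𝕜 ι m k : Type*} [RCLike 𝕜] [Fintype m] [Fintype k]
    (s : Finset ι) (d : ι → ℝ) (P : ι → Matrix m k 𝕜) (σ : Matrix k m 𝕜) :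
    RCLike.re ((∑ i ∈ s, (d i : 𝕜) • P i) * σ).trace
      = ∑ i ∈ s, d i * RCLike.re (P i * σ).trace := by
  simp only [Matrix.sum_mul, Matrix.smul_mul, trace_sum, trace_smul, smul_eq_mul, map_sum,
    RCLike.re_ofReal_mul]

theorem stmt1_general {𝕜 S m k : Type*} [RCLike 𝕜] [Fintype S] [Fintype m] [Fintype k]
    (d : S → ℝ) (hd : ∃ s, d s ≠ 0) (P : S → Matrix m k 𝕜) (σ : Matrix k m 𝕜)
    (H : Matrix m k 𝕜) (hH : H = ∑ s, (d s : 𝕜) • P s)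
    (D : ℝ) (hD : D = ∑ s, |d s|) (a : ℝ) (ha : RCLike.re (H * σ).trace ≤ a) :
    1 / 2 - a / (2 * D)
      ≤ ∑ s, (|d s| / D) * ((1 - Real.sign (d s) * RCLike.re (P s * σ).trace) / 2) := by
  obtain ⟨s₀, hs₀⟩ := hd
  have D_pos : 0 < D := hD ▸
    Finset.sum_pos' (fun s _ => abs_nonneg (d s)) ⟨s₀, Finset.mem_univ s₀, abs_pos.mpr hs₀⟩
  have energy_eq : RCLike.re (H * σ).trace = ∑ s, d s * RCLike.re (P s * σ).trace := by
    rw [hH, re_trace_sum_ofReal_smul_mul]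
  calc 1 / 2 - a / (2 * D)
      ≤ 1 / 2 - RCLike.re (H * σ).trace / (2 * D) := by gcongr
    _ = ∑ s, (|d s| / D) * ((1 - Real.sign (d s) * RCLike.re (P s * σ).trace) / 2) := by
        rw [energy_eq, sum_abs_div_mul_one_sub_sign_mul_div_two _ _ _ hD D_pos.ne']

theorem stmt1 {S : Type*} [Fintype S] [Nonempty S] (n : ℕ)
    (d : S → ℝ) (hd : ∀ s, d s ≠ 0)
    (P : S → Matrix (Fin n → Fin 2) (Fin n → Fin 2) ℂ)
    (hP : ∀ s, ∃ M : Fin n → Matrix (Fin 2) (Fin 2) ℂ,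
      (∀ i, M i = 1 ∨ M i = pauliX ∨ M i = pauliZ) ∧ P s = kronPowFam M)
    (σ : Matrix (Fin n → Fin 2) (Fin n → Fin 2) ℂ)
    (hσ : σ.PosSemidef) (hσtr : σ.trace = 1)
    (H : Matrix (Fin n → Fin 2) (Fin n → Fin 2) ℂ)
    (hH : H = ∑ s, (d s : ℂ) • P s)
    (D : ℝ) (hD : D = ∑ s, |d s|) (a : ℝ)
    (ha : ((H * σ).trace).re ≤ a) :
    1 / 2 - a / (2 * D)
      ≤ ∑ s, (|d s| / D) * ((1 - Real.sign (d s) * ((P s * σ).trace).re) / 2) :=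
  stmt1_general d ⟨Classical.arbitrary S, hd _⟩ P σ H hH D hD a ha
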